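/- Let n ≥ 0 and let x_1, …, x_n ∈ (0,1) be pairwise distinct real numbers. Define the meromorphic function f(τ) = η(τ)^4 / ( (J(τ) − 1) ∏_{j=1}^n (J(τ) − x_j)² ) on the upper half-plane. Then f has a double pole at τ = i with vanishing residue; precisely, the limit as τ → i (τ ≠ i) of the derivative (d/dτ)[ (τ − i)² f(τ) ] equals 0. -/

import Mathlib

open Complex Filter Topology

noncomputable section

/-- The nome `q = e^{2πiτ}`. -/
def qq (τ : ℂ) : ℂ := Complex.exp (2 * Real.pi * Complex.I * τ)

/-- The Eisenstein series `E₄(τ) = 1 + 240 Σ_{n≥1} σ₃(n) qⁿ`. -/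
def E4 (τ : ℂ) : ℂ := 1 + 240 * ∑' n : ℕ, (∑ d ∈ (n + 1).divisors, (d : ℂ) ^ 3) * qq τ ^ (n + 1)

/-- The Eisenstein series `E₆(τ) = 1 − 504 Σ_{n≥1} σ₅(n) qⁿ`. -/
def E6 (τ : ℂ) : ℂ := 1 - 504 * ∑' n : ℕ, (∑ d ∈ (n + 1).divisors, (d : ℂ) ^ 5) * qq τ ^ (n + 1)

/-- The normalized elliptic modular function `J = E₄³ / (E₄³ − E₆²)`. -/
def J (τ : ℂ) : ℂ := E4 τ ^ 3 / (E4 τ ^ 3 - E6 τ ^ 2)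

/-- The Dedekind eta function `η(τ) = e^{πiτ/12} ∏_{n≥1} (1 − qⁿ)`. -/
def dedekindEta (τ : ℂ) : ℂ := Complex.exp (Real.pi * Complex.I * τ / 12) * ∏' n : ℕ, (1 - qq τ ^ (n + 1))

/-- The elliptic point `ρ = e^{2πi/3}`. -/
def rho : ℂ := Complex.exp (2 * Real.pi * Complex.I / 3)

/-!
The involution `τ ↦ -τ⁻¹` fixes `i` with derivative `-1` there. Under it `J` is invariant, `η⁴` is
multiplied by `-τ²`, and `(τ - i)²` by `-τ⁻²`, so `(τ - i)² f(τ)` is invariant. Since `E₆` has a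
simple zero at `i`, the function `J - 1 = E₆² / (E₄³ - E₆²)` has a double zero there, hence `f` has
at most a double pole and `(τ - i)² f(τ)` extends analytically to `i`. The chain rule at the fixed
point shows that the derivative of the extension equals its own negative, so it vanishes.
-/

section FixedPoint

variable {𝕜 E : Type*} [NontriviallyNormedField 𝕜] [NormedAddCommGroup E] [NormedSpace 𝕜 E]
  {σ : 𝕜 → 𝕜} {g : 𝕜 → E} {a c : 𝕜}

lemma deriv_eq_zero_of_comp_eventuallyEq (hσ : HasDerivAt σ c a) (hσa : σ a = a) (hc : c ≠ 1)
    (hg : DifferentiableAt 𝕜 g a) (h : g ∘ σ =ᶠ[𝓝 a] g) : deriv g a = 0 := by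
  have hcomp : HasDerivAt (g ∘ σ) (c • deriv g a) a :=
    HasDerivAt.scomp a (by simpa only [hσa] using hg.hasDerivAt) hσ
  have heq : c • deriv g a = deriv g a := (hcomp.congr_of_eventuallyEq h.symm).unique hg.hasDerivAt
  have : (c - 1) • deriv g a = 0 := by rw [sub_smul, one_smul, heq, sub_self]
  exact (smul_eq_zero.mp this).resolve_left (sub_ne_zero.mpr hc)

lemma tendsto_deriv_nhdsNE_zero_of_comp_eventuallyEq [CompleteSpace E] (hσ : HasDerivAt σ c a)
    (hσa : σ a = a) (hc₀ : c ≠ 0) (hc₁ : c ≠ 1) (hg : MeromorphicAt g a)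
    (hord : 0 ≤ meromorphicOrderAt g a) (h : g ∘ σ =ᶠ[𝓝[≠] a] g) :
    Tendsto (deriv g) (𝓝[≠] a) (𝓝 0) := by
  obtain ⟨G, hG, hgG⟩ := hg.meromorphicOrderAt_nonneg_iff.mp hord
  have hσ_tendsto : Tendsto σ (𝓝[≠] a) (𝓝[≠] a) := by
    simpa only [hσa] using hσ.tendsto_nhdsNE hc₀
  have hGσ_nhdsNE : G ∘ σ =ᶠ[𝓝[≠] a] G :=
    ((hgG.comp_tendsto hσ_tendsto).symm.trans h).trans hgG
  have hGσ_cont : ContinuousAt (G ∘ σ) a :=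
    ContinuousAt.comp (by simpa only [hσa] using hG.continuousAt) hσ.continuousAt
  have hGσ : G ∘ σ =ᶠ[𝓝 a] G :=
    (hGσ_cont.eventuallyEq_nhds_iff_eventuallyEq_nhdsNE hG.continuousAt).mp hGσ_nhdsNE
  rw [← deriv_eq_zero_of_comp_eventuallyEq hσ hσa hc₁ hG.differentiableAt hGσ]
  exact (hG.deriv.continuousAt.tendsto.mono_left nhdsWithin_le_nhds).congr' hgG.nhdsNE_deriv.symm

end FixedPoint

lemma hasDerivAt_neg_inv_I : HasDerivAt (fun z : ℂ ↦ -z⁻¹) (-1) I := by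
  simpa using (hasDerivAt_inv I_ne_zero).fun_neg

lemma tendsto_deriv_sub_I_sq_mul_nhdsNE {f : ℂ → ℂ} (hf : MeromorphicAt f I)
    (hord : (-2 : ℤ) ≤ meromorphicOrderAt f I) (hinv : ∀ᶠ z in 𝓝[≠] I, f (-z⁻¹) = -z ^ 2 * f z) :
    Tendsto (deriv fun z ↦ (z - I) ^ 2 * f z) (𝓝[≠] I) (𝓝 0) := by
  refine tendsto_deriv_nhdsNE_zero_of_comp_eventuallyEq hasDerivAt_neg_inv_I (by simp)
    (by norm_num) (by norm_num) (by fun_prop) ?_ ?_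
  · rw [fun_meromorphicOrderAt_mul (by fun_prop) hf, fun_meromorphicOrderAt_pow_id_sub_const]
    simpa using add_le_add_right hord 2
  · filter_upwards [hinv, nhdsWithin_le_nhds (eventually_ne_nhds I_ne_zero)] with z hz hz₀
    have hsq : (-z⁻¹ - I) ^ 2 * z ^ 2 = -(z - I) ^ 2 := by
      field_simp
      linear_combination (1 + z ^ 2) * I_sq
    rw [Function.comp_apply, hz]
    linear_combination -f z * hsq

/-- The Lambert-type series `∑ σₖ(n) qⁿ` over `n ≥ 1`, in terms of which all level one Eisenstein
series are written; it is indexed by `n - 1`, as in the definitions of `E4` and `E6`. -/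
def divisorSeries (k : ℕ) (τ : ℂ) : ℂ :=
  ∑' n : ℕ, (∑ d ∈ (n + 1).divisors, (d : ℂ) ^ k) * qq τ ^ (n + 1)

lemma E4_eq_divisorSeries (τ : ℂ) : E4 τ = 1 + 240 * divisorSeries 3 τ := rfl

lemma E6_eq_divisorSeries (τ : ℂ) : E6 τ = 1 - 504 * divisorSeries 5 τ := rfl

section DivisorSeries

variable (k : ℕ) {τ : ℂ}

lemma hasDerivAt_qq (τ : ℂ) : HasDerivAt qq (qq τ * (2 * Real.pi * I)) τ :=
  (((hasDerivAt_id τ).const_mul (2 * Real.pi * I : ℂ)).cexp).congr_deriv (by rw [mul_one]; rfl)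

lemma norm_qq (τ : ℂ) : ‖qq τ‖ = Real.exp (-(2 * Real.pi * τ.im)) := by
  simp [qq, norm_exp]

lemma qq_ofReal_mul_I (t : ℝ) : qq (t * I) = (Real.exp (-(2 * Real.pi * t)) : ℝ) := by
  rw [qq]
  push_cast
  congr 1
  linear_combination 2 * (Real.pi : ℂ) * t * I_sq

lemma isOpen_lt_im (c : ℝ) : IsOpen {w : ℂ | c < w.im} :=
  isOpen_lt continuous_const continuous_im

lemma differentiable_divisorSeries_term (n : ℕ) :
    Differentiable ℂ fun w ↦ (∑ d ∈ (n + 1).divisors, (d : ℂ) ^ k) * qq w ^ (n + 1) :=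
  fun w ↦ ((hasDerivAt_qq w).differentiableAt.pow _).const_mul _

lemma exists_summable_bound_divisorSeries {c : ℝ} (hc : 0 < c) :
    ∃ u : ℕ → ℝ, Summable u ∧ ∀ (n : ℕ), ∀ w ∈ {w : ℂ | c < w.im},
      ‖(∑ d ∈ (n + 1).divisors, (d : ℂ) ^ k) * qq w ^ (n + 1)‖ ≤ u n := by
  let z : UpperHalfPlane := ⟨c * I, by simpa using hc⟩
  refine ⟨_, (summable_nat_add_iff 1).mpr
    (EisensteinSeries.summable_sigma_mul_cexp_pow (Nat.le_add_left 1 k) z).norm, fun n w hw ↦ ?_⟩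
  have hq : ‖qq w‖ ≤ ‖qq z‖ := by
    simp only [norm_qq, z, im_ofReal_mul, I_im, mul_one]
    gcongr
    exact hw.le
  simp only [norm_mul, norm_pow, add_tsub_cancel_right, ArithmeticFunction.sigma_apply,
    Nat.cast_sum, Nat.cast_pow]
  gcongr
  exact hq

lemma differentiableAt_divisorSeries (hτ : 0 < τ.im) :
    DifferentiableAt ℂ (divisorSeries k) τ := by
  obtain ⟨u, hu, hbound⟩ := exists_summable_bound_divisorSeries k (half_pos hτ)
  exact (differentiableOn_tsum_of_summable_norm hu
    (fun n ↦ (differentiable_divisorSeries_term k n).differentiableOn) (isOpen_lt_im _)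
    hbound).differentiableAt ((isOpen_lt_im _).mem_nhds (half_lt_self hτ))

lemma hasSum_deriv_divisorSeries (hτ : 0 < τ.im) :
    HasSum (fun n : ℕ ↦ (∑ d ∈ (n + 1).divisors, (d : ℂ) ^ k) *
      ((n + 1) * qq τ ^ (n + 1) * (2 * Real.pi * I))) (deriv (divisorSeries k) τ) := by
  obtain ⟨u, hu, hbound⟩ := exists_summable_bound_divisorSeries k (half_pos hτ)
  refine (hasSum_deriv_of_summable_norm hu
    (fun n ↦ (differentiable_divisorSeries_term k n).differentiableOn) (isOpen_lt_im _) hbound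
    (half_lt_self hτ)).congr_fun fun n ↦ ?_
  rw [(((hasDerivAt_qq τ).fun_pow (n + 1)).const_mul _).deriv]
  push_cast
  ring

lemma im_deriv_divisorSeries_pos {t : ℝ} (ht : 0 < t) :
    0 < (deriv (divisorSeries k) (t * I)).im := by
  have hsum := hasSum_im (hasSum_deriv_divisorSeries k (τ := t * I) (by simpa using ht))
  have hterm (n : ℕ) : (∑ d ∈ (n + 1).divisors, (d : ℂ) ^ k) *
      ((n + 1) * qq (t * I) ^ (n + 1) * (2 * Real.pi * I)) =
      ((∑ d ∈ (n + 1).divisors, (d : ℝ) ^ k) *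
        ((n + 1) * Real.exp (-(2 * Real.pi * t)) ^ (n + 1) * (2 * Real.pi)) : ℝ) * I := by
    rw [qq_ofReal_mul_I]
    push_cast
    ring
  simp only [hterm, im_ofReal_mul, I_im, mul_one] at hsum
  have hterm_pos (n : ℕ) : 0 < (∑ d ∈ (n + 1).divisors, (d : ℝ) ^ k) *
      ((n + 1) * Real.exp (-(2 * Real.pi * t)) ^ (n + 1) * (2 * Real.pi)) := by
    have : 0 < ∑ d ∈ (n + 1).divisors, (d : ℝ) ^ k :=
      Finset.sum_pos (fun d hd ↦ pow_pos (Nat.cast_pos.mpr (Nat.pos_of_mem_divisors hd)) _)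
        ⟨1, by simp⟩
    positivity
  rw [← hsum.tsum_eq]
  exact hsum.summable.tsum_pos (fun n ↦ (hterm_pos n).le) 0 (hterm_pos 0)

end DivisorSeries

section Modularity

open scoped MatrixGroups UpperHalfPlane

lemma eisensteinSeries_eq_one_sub_divisorSeries {k : ℕ} (hk : 3 ≤ k) (hk_even : Even k) (z : ℍ) :
    ModularForm.E hk z = 1 - 2 * k / bernoulli k * divisorSeries (k - 1) z := by
  rw [EisensteinSeries.q_expansion_bernoulli hk hk_even]
  simp only [zpow_natCast]
  rw [tsum_pnat_eq_tsum_succ (f := fun n ↦ (ArithmeticFunction.sigma (k - 1) n : ℂ) *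
    cexp (2 * Real.pi * I * z) ^ n)]
  simp only [divisorSeries, qq, ArithmeticFunction.sigma_apply, Nat.cast_sum, Nat.cast_pow]

lemma bernoulli_four : bernoulli 4 = -1 / 30 := by
  rw [bernoulli_eq_bernoulli'_of_ne_one (by decide), bernoulli'_four]

lemma bernoulli_six : bernoulli 6 = 1 / 42 := by
  have h5 : bernoulli' 5 = 0 := bernoulli'_eq_zero_of_odd (by decide) (by decide)
  rw [bernoulli_eq_bernoulli'_of_ne_one (by decide), bernoulli'_def]
  norm_num [Finset.sum_range_succ, h5, Nat.choose]

lemma E4_coe (z : ℍ) : E4 z = ModularForm.E₄ z := by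
  rw [eisensteinSeries_eq_one_sub_divisorSeries _ ⟨2, rfl⟩, bernoulli_four, E4_eq_divisorSeries]
  norm_num

lemma E6_coe (z : ℍ) : E6 z = ModularForm.E₆ z := by
  rw [eisensteinSeries_eq_one_sub_divisorSeries _ ⟨3, rfl⟩, bernoulli_six, E6_eq_divisorSeries]
  norm_num

lemma slashInvariantForm_neg_inv {F : Type*} [FunLike F ℍ ℂ] {k : ℤ}
    [SlashInvariantFormClass F 𝒮ℒ k] (f : F) (z : ℍ) :
    f ⟨(-z : ℂ)⁻¹, z.im_inv_neg_coe_pos⟩ = (z : ℂ) ^ k * f z := by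
  have hS : ((ModularGroup.S : SL(2, ℤ)) : GL (Fin 2) ℝ) ∈ 𝒮ℒ := ⟨ModularGroup.S, rfl⟩
  rw [← UpperHalfPlane.modular_S_smul]
  refine (SlashInvariantForm.slash_action_eqn' f hS z).trans ?_
  simp [ModularGroup.coe_S, Matrix.SpecialLinearGroup.map_apply_coe]

variable {z : ℂ}

lemma E4_neg_inv (hz : 0 < z.im) : E4 (-z⁻¹) = z ^ 4 * E4 z := by
  have h := slashInvariantForm_neg_inv ModularForm.E₄ ⟨z, hz⟩
  rw [← E4_coe, ← E4_coe] at h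
  rw [← inv_neg]
  exact mod_cast h

lemma E6_neg_inv (hz : 0 < z.im) : E6 (-z⁻¹) = z ^ 6 * E6 z := by
  have h := slashInvariantForm_neg_inv ModularForm.E₆ ⟨z, hz⟩
  rw [← E6_coe, ← E6_coe] at h
  rw [← inv_neg]
  exact mod_cast h

lemma J_neg_inv (hz : 0 < z.im) : J (-z⁻¹) = J z := by
  have hz₀ : z ≠ 0 := by rintro rfl; simp at hz
  rw [J, E4_neg_inv hz, E6_neg_inv hz, J, ← mul_div_mul_left (E4 z ^ 3) _ (pow_ne_zero 12 hz₀)]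
  ring_nf

lemma dedekindEta_eq_eta : dedekindEta = ModularForm.eta := by
  ext z
  simp only [dedekindEta, ModularForm.eta, ModularForm.eta_q_eq_pow, qq, Function.Periodic.qParam]
  congr 2
  push_cast
  ring

lemma sqrt_pow_four (z : ℂ) : sqrt z ^ 4 = z ^ 2 := by
  rw [show 4 = 2 * 2 from rfl, pow_mul, sqrt, cpow_ofNat_inv_pow]

lemma dedekindEta_neg_inv_pow_four (hz : 0 < z.im) :
    dedekindEta (-z⁻¹) ^ 4 = -z ^ 2 * dedekindEta z ^ 4 := by
  have h : ModularForm.eta (-z⁻¹) = (sqrt I)⁻¹ * (sqrt z * ModularForm.eta z) := by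
    simpa [neg_div] using ModularForm.eta_comp_eq_csqrt_I_inv hz
  rw [dedekindEta_eq_eta, h, mul_pow, mul_pow, inv_pow, sqrt_pow_four, sqrt_pow_four, I_sq]
  ring

lemma E4_cube_sub_E6_sq_ne_zero (hz : 0 < z.im) : E4 z ^ 3 - E6 z ^ 2 ≠ 0 := by
  have h := ModularForm.discriminant_ne_zero ⟨z, hz⟩
  rw [ModularForm.discriminant_eq_E₄_cube_sub_E₆_sq, ← E4_coe, ← E6_coe] at h
  exact (div_ne_zero_iff.mp h).1

lemma J_sub_one (hz : 0 < z.im) : J z - 1 = E6 z ^ 2 / (E4 z ^ 3 - E6 z ^ 2) := by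
  rw [J, div_sub_one (E4_cube_sub_E6_sq_ne_zero hz), sub_sub_cancel]

end Modularity

section OrderAtI

variable {z : ℂ}

lemma eventually_nhds_im_pos (hz : 0 < z.im) : ∀ᶠ w : ℂ in 𝓝 z, 0 < w.im :=
  (isOpen_lt_im 0).mem_nhds hz

lemma analyticAt_of_forall_im_pos {F : ℂ → ℂ} (hF : ∀ w : ℂ, 0 < w.im → DifferentiableAt ℂ F w)
    (hz : 0 < z.im) : AnalyticAt ℂ F z :=
  analyticAt_iff_eventually_differentiableAt.mpr ((eventually_nhds_im_pos hz).mono hF)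

lemma analyticAt_E4 (hz : 0 < z.im) : AnalyticAt ℂ E4 z :=
  analyticAt_of_forall_im_pos
    (fun _ hw ↦ ((differentiableAt_divisorSeries 3 hw).const_mul 240).const_add 1) hz

lemma analyticAt_E6 (hz : 0 < z.im) : AnalyticAt ℂ E6 z :=
  analyticAt_of_forall_im_pos
    (fun _ hw ↦ ((differentiableAt_divisorSeries 5 hw).const_mul 504).const_sub 1) hz

lemma analyticAt_dedekindEta (hz : 0 < z.im) : AnalyticAt ℂ dedekindEta z :=
  dedekindEta_eq_eta ▸ analyticAt_of_forall_im_pos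
    (fun _ hw ↦ ModularForm.differentiableAt_eta_of_mem_upperHalfPlaneSet hw) hz

lemma analyticAt_J (hz : 0 < z.im) : AnalyticAt ℂ J z :=
  ((analyticAt_E4 hz).pow 3).div (((analyticAt_E4 hz).pow 3).sub ((analyticAt_E6 hz).pow 2))
    (E4_cube_sub_E6_sq_ne_zero hz)

lemma E6_I : E6 I = 0 := by
  have h : E6 I = I ^ 6 * E6 I := by simpa using E6_neg_inv (z := I) (by simp)
  have hI : I ^ 6 = -1 := by rw [show 6 = 2 * 3 from rfl, pow_mul, I_sq]; norm_num
  rw [hI] at h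
  linear_combination h / 2

lemma J_I : J I = 1 := by
  have h := J_sub_one (z := I) (by simp)
  rwa [E6_I, zero_pow two_ne_zero, zero_div, sub_eq_zero] at h

lemma deriv_E6_I_ne_zero : deriv E6 I ≠ 0 := by
  have hd : HasDerivAt E6 (-(504 * deriv (divisorSeries 5) I)) I :=
    ((differentiableAt_divisorSeries 5 (by simp)).hasDerivAt.const_mul 504).const_sub 1
  have hpos : 0 < (deriv (divisorSeries 5) I).im := by
    simpa using im_deriv_divisorSeries_pos 5 one_pos
  have hne : deriv (divisorSeries 5) I ≠ 0 := fun h ↦ by simp [h] at hpos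
  rw [hd.deriv]
  simpa using hne

lemma analyticOrderAt_E6_I : analyticOrderAt E6 I = 1 :=
  (analyticAt_E6 (by simp)).analyticOrderAt_eq_one_of_zero_deriv_ne_zero E6_I deriv_E6_I_ne_zero

lemma analyticOrderAt_J_sub_one_I : analyticOrderAt (J · - 1) I = 2 := by
  have hE4 : AnalyticAt ℂ E4 I := analyticAt_E4 (by simp)
  have hE6 : AnalyticAt ℂ E6 I := analyticAt_E6 (by simp)
  have hden : AnalyticAt ℂ (E4 ^ 3 - E6 ^ 2)⁻¹ I :=
    ((hE4.pow 3).sub (hE6.pow 2)).inv (E4_cube_sub_E6_sq_ne_zero (by simp))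
  have hden_order : analyticOrderAt (E4 ^ 3 - E6 ^ 2)⁻¹ I = 0 :=
    hden.analyticOrderAt_eq_zero.mpr (inv_ne_zero (E4_cube_sub_E6_sq_ne_zero (by simp)))
  have hJ : (J · - 1) =ᶠ[𝓝 I] E6 ^ 2 * (E4 ^ 3 - E6 ^ 2)⁻¹ :=
    (eventually_nhds_im_pos (by simp)).mono fun z hz ↦ by
      simp [J_sub_one hz, div_eq_mul_inv]
  rw [analyticOrderAt_congr hJ, analyticOrderAt_mul (hE6.pow 2) hden, analyticOrderAt_pow hE6,
    analyticOrderAt_E6_I, hden_order]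
  rfl

lemma not_eventuallyConst_J_I : ¬EventuallyConst J (𝓝 I) := by
  rw [eventuallyConst_iff_analyticOrderAt_sub_eq_top, J_I, analyticOrderAt_J_sub_one_I]
  simp

lemma meromorphicOrderAt_comp_J_I {Q : ℂ → ℂ} (hQ : MeromorphicAt Q 1) :
    meromorphicOrderAt (fun z ↦ Q (J z)) I = meromorphicOrderAt Q 1 * (2 : ℤ) := by
  have h : meromorphicOrderAt (fun z ↦ Q (J z)) I = _ :=
    MeromorphicAt.meromorphicOrderAt_comp (by rwa [J_I]) (analyticAt_J (by simp))
      not_eventuallyConst_J_I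
  rw [h, J_I, analyticOrderAt_J_sub_one_I]
  rfl

lemma meromorphicAt_comp_J_I {Q : ℂ → ℂ} (hQ : MeromorphicAt Q 1) :
    MeromorphicAt (fun z ↦ Q (J z)) I :=
  MeromorphicAt.comp_analyticAt (by rwa [J_I]) (analyticAt_J (by simp))

lemma neg_two_le_meromorphicOrderAt_div_comp_J_I {g Q : ℂ → ℂ} (hg : AnalyticAt ℂ g I)
    (hQ : MeromorphicAt Q 1) (hord : meromorphicOrderAt Q 1 ≤ 1) :
    (-2 : ℤ) ≤ meromorphicOrderAt (fun z ↦ g z / Q (J z)) I := by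
  have hg_order := hg.meromorphicOrderAt_nonneg
  rw [fun_meromorphicOrderAt_div hg.meromorphicAt (meromorphicAt_comp_J_I hQ),
    meromorphicOrderAt_comp_J_I hQ]
  lift meromorphicOrderAt Q 1 to ℤ using (hord.trans_lt (WithTop.coe_lt_top 1)).ne with m
  generalize meromorphicOrderAt g I = l at hg_order ⊢
  cases l with
  | top => simp
  | coe l =>
    norm_cast at *
    lia

end OrderAtI

lemma meromorphicOrderAt_sub_mul_prod_sub_sq {𝕜 ι : Type*} [NontriviallyNormedField 𝕜] [Fintype ι]
    {a : 𝕜} {x : ι → 𝕜} (hx : ∀ j, x j ≠ a) :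
    meromorphicOrderAt (fun w ↦ (w - a) * ∏ j, (w - x j) ^ 2) a = 1 := by
  have hP : AnalyticAt 𝕜 (fun w ↦ ∏ j, (w - x j) ^ 2) a := by fun_prop
  have hPa : ∏ j, (a - x j) ^ 2 ≠ 0 :=
    Finset.prod_ne_zero_iff.mpr fun j _ ↦ pow_ne_zero 2 (sub_ne_zero.mpr (hx j).symm)
  simp_rw [mul_comm (_ - a)]
  exact (meromorphicOrderAt_mul_of_ne_zero hP hPa).trans meromorphicOrderAt_id_sub_const

theorem residue_at_i_vanishes_general {Q : ℂ → ℂ} (hQ : MeromorphicAt Q 1)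
    (hord : meromorphicOrderAt Q 1 ≤ 1) :
    Tendsto (deriv fun z ↦ (z - I) ^ 2 * (dedekindEta z ^ 4 / Q (J z))) (𝓝[≠] I) (𝓝 0) := by
  have hη : AnalyticAt ℂ (fun z ↦ dedekindEta z ^ 4) I := (analyticAt_dedekindEta (by simp)).pow 4
  refine tendsto_deriv_sub_I_sq_mul_nhdsNE (hη.meromorphicAt.fun_div (meromorphicAt_comp_J_I hQ))
    (neg_two_le_meromorphicOrderAt_div_comp_J_I hη hQ hord) ?_
  filter_upwards [nhdsWithin_le_nhds (eventually_nhds_im_pos (by simp))] with z hz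
  rw [dedekindEta_neg_inv_pow_four hz, J_neg_inv hz, mul_div_assoc]

/-- The residue of `η⁴ / ((J−1)·∏ⱼ(J−xⱼ)²)` at its double pole `τ = i` vanishes:
`lim_{τ→i, τ≠i} (d/dτ)[(τ−i)² f(τ)] = 0`. -/
theorem residue_at_i_vanishes (n : ℕ) (x : Fin n → ℝ)
    (hx : ∀ j, x j ∈ Set.Ioo (0 : ℝ) 1) (hinj : Function.Injective x) :
    Tendsto
      (fun τ : ℂ => deriv (fun z : ℂ =>
        (z - Complex.I) ^ 2 *
          (dedekindEta z ^ 4 / ((J z - 1) * ∏ j, (J z - (x j : ℂ)) ^ 2))) τ)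
      (𝓝[≠] Complex.I) (𝓝 0) := by
  have hx_ne : ∀ j, (x j : ℂ) ≠ 1 := fun j ↦ mod_cast (hx j).2.ne
  exact residue_at_i_vanishes_general (Q := fun w ↦ (w - 1) * ∏ j, (w - x j) ^ 2) (by fun_prop)
    (meromorphicOrderAt_sub_mul_prod_sub_sq hx_ne).le
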